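/- Let X be a topological space, n ≥ 1 a natural number, and α : [0,1] → Conf_n(X) a path (a continuous map into the ordered configuration space). For each t ∈ [0,1] write A(t) = X ∖ {α(t)(1), …, α(t)(n)}. Suppose C, D : [0,1] → Set X are such that for every t, C(t) and D(t) are connected components of A(t) (that is, nonempty maximal connected subsets of A(t)). Assume: (1) C is monotone, i.e. C(t) ⊆ C(s) whenever t ≤ s; (2) D is locally consistent, i.e. for every t ∈ [0,1] and every point p ∈ D(t) there exists ε > 0 such that p ∈ D(s) for all s ∈ [0,1] with |s − t| < ε; and (3) C(0) = D(0). Then C(t) = D(t) for all t ∈ [0,1]. -/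

import Mathlib

/-- The ordered configuration space of `n` points in `X`, topologized as a
subspace of the product `X^n`. -/
abbrev Conf (n : ℕ) (X : Type*) [TopologicalSpace X] : Type _ :=
  {x : Fin n → X // Function.Injective x}

/-!
Two components of the same set that share a point coincide, so it suffices to find a common point
of `C t` and `D t`. A point of `D t` persists in `D` for nearby times, while a point of `C` persists
for all later times. Hence agreement of `C` and `D` passes to limits from the left and spreads to
the right of every time where it holds, and it propagates by continuous induction on time.
Agreement need not pass to limits from the right, because distinct components may merge immediately
after a given time; this is why the times of agreement are not treated as an open and closed set.
-/

open Filter Set Topology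

section ContinuousInduction

variable {T : Type*} [ConditionallyCompleteLinearOrder T] [TopologicalSpace T] [OrderTopology T]
  [DenselyOrdered T]

theorem Ici_subset_of_frequently_nhdsLT_of_mem_nhdsGT {s : Set T} {a : T} (ha : a ∈ s)
    (hleft : ∀ t, a < t → (∃ᶠ u in 𝓝[<] t, u ∈ s) → t ∈ s)
    (hright : ∀ t ∈ s, a ≤ t → s ∈ 𝓝[>] t) : Ici a ⊆ s := by
  by_contra hnot
  have hne : (Ici a \ s).Nonempty := sdiff_nonempty.2 hnot
  obtain ⟨m, hglb⟩ : ∃ m, IsGLB (Ici a \ s) m := ⟨_, isGLB_csInf hne ⟨a, fun _ ht ↦ ht.1⟩⟩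
  have ham : a ≤ m := hglb.2 fun _ ht ↦ ht.1
  have hbelow : Ico a m ⊆ s := fun u hu ↦ by
    by_contra hus
    exact hu.2.not_ge (hglb.1 ⟨hu.1, hus⟩)
  have hm : m ∈ s := by
    obtain rfl | hlt := ham.eq_or_lt
    · exact ha
    · have : (𝓝[<] m).NeBot := nhdsLT_neBot_of_exists_lt ⟨a, hlt⟩
      have hev : ∀ᶠ u in 𝓝[<] m, u ∈ s := mem_of_superset (Ico_mem_nhdsLT hlt) hbelow
      exact hleft m hlt hev.frequently
  have hnhds : ∀ᶠ u in 𝓝[≥] m, u ∈ s := by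
    rw [← Ioi_insert, nhdsWithin_insert]
    exact ⟨hm, hright m hm ham⟩
  obtain ⟨u, hu, hus⟩ := ((hglb.frequently_mem hne).and_eventually hnhds).exists
  exact hu.2 hus

end ContinuousInduction

section SystemsOfComponents

variable {T X : Type*} [TopologicalSpace X] {A C D : T → Set X}

/-- `C` is a system of components along the family `A`: it assigns to each time `t` a connected
component of `A t`. The base point is required to lie in `A t` because `connectedComponentIn` is
empty otherwise. -/
def IsSystemOfComponents (A C : T → Set X) : Prop :=
  ∀ t, ∃ p ∈ A t, C t = connectedComponentIn (A t) p

/-- Local consistency of a system of components `D`: each point of `D t` stays in `D s` for all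
times `s` near `t`. It is phrased with neighbourhood filters, so that time need not be metric. -/
def IsLocallyConsistent [TopologicalSpace T] (D : T → Set X) : Prop :=
  ∀ t, ∀ p ∈ D t, ∀ᶠ s in 𝓝 t, p ∈ D s

namespace IsSystemOfComponents

theorem nonempty (hC : IsSystemOfComponents A C) (t : T) : (C t).Nonempty := by
  obtain ⟨p, hp, hCt⟩ := hC t
  exact ⟨p, hCt ▸ mem_connectedComponentIn hp⟩

theorem eq_connectedComponentIn (hC : IsSystemOfComponents A C) {t : T} {p : X} (hp : p ∈ C t) :
    C t = connectedComponentIn (A t) p := by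
  obtain ⟨q, -, hCt⟩ := hC t
  rw [hCt] at hp ⊢
  exact connectedComponentIn_eq hp

theorem eq_of_mem_of_mem (hC : IsSystemOfComponents A C) (hD : IsSystemOfComponents A D) {t : T}
    {p : X} (hpC : p ∈ C t) (hpD : p ∈ D t) : C t = D t :=
  (hC.eq_connectedComponentIn hpC).trans (hD.eq_connectedComponentIn hpD).symm

variable [TopologicalSpace T] [Preorder T]

theorem eq_of_frequently_nhdsLT_eq (hC : IsSystemOfComponents A C)
    (hD : IsSystemOfComponents A D) (hmono : Monotone C) (hloc : IsLocallyConsistent D) {t : T}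
    (hfreq : ∃ᶠ s in 𝓝[<] t, C s = D s) : C t = D t := by
  obtain ⟨p, hp⟩ := hD.nonempty t
  have hnear : ∀ᶠ s in 𝓝[<] t, p ∈ D s := (hloc t p hp).filter_mono nhdsWithin_le_nhds
  obtain ⟨s, hs, hps, hst⟩ :=
    (hfreq.and_eventually (hnear.and eventually_mem_nhdsWithin)).exists
  have hpC : p ∈ C t := hmono (le_of_lt hst) (hs ▸ hps)
  exact hC.eq_of_mem_of_mem hD hpC hp

theorem eventually_nhdsGT_eq (hC : IsSystemOfComponents A C) (hD : IsSystemOfComponents A D)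
    (hmono : Monotone C) (hloc : IsLocallyConsistent D) {t : T} (ht : C t = D t) :
    ∀ᶠ s in 𝓝[>] t, C s = D s := by
  obtain ⟨p, hp⟩ := hD.nonempty t
  filter_upwards [(hloc t p hp).filter_mono nhdsWithin_le_nhds, self_mem_nhdsWithin] with s hps hts
  have hpC : p ∈ C s := hmono (le_of_lt hts) (ht ▸ hp)
  exact hC.eq_of_mem_of_mem hD hpC hps

end IsSystemOfComponents

end SystemsOfComponents

theorem monotone_system_unique_locally_consistent_general {T X : Type*}
    [ConditionallyCompleteLinearOrder T] [TopologicalSpace T] [OrderTopology T] [DenselyOrdered T]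
    [TopologicalSpace X] {A C D : T → Set X} (hC : IsSystemOfComponents A C)
    (hD : IsSystemOfComponents A D) (hmono : Monotone C) (hloc : IsLocallyConsistent D) {a : T}
    (ha : C a = D a) : ∀ t, a ≤ t → C t = D t :=
  Ici_subset_of_frequently_nhdsLT_of_mem_nhdsGT (s := {t | C t = D t}) ha
    (fun _ _ hfreq ↦ hC.eq_of_frequently_nhdsLT_eq hD hmono hloc hfreq)
    fun _ ht _ ↦ hC.eventually_nhdsGT_eq hD hmono hloc ht

/-- Growing components lemma: along a path `α` in `Conf_n(X)`, a monotone system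
of connected components `C` of the complements `A(t) = X ∖ {α(t)(1), …, α(t)(n)}`
is the unique locally consistent system of components with its starting
component. -/
theorem monotone_system_unique_locally_consistent
    (X : Type*) [TopologicalSpace X] (n : ℕ) (hn : 1 ≤ n)
    (α : unitInterval → Conf n X) (hα : Continuous α)
    (C D : unitInterval → Set X)
    (hC : ∀ t : unitInterval, ∃ p ∈ {q : X | ∀ i : Fin n, q ≠ (α t).1 i},
      C t = connectedComponentIn {q : X | ∀ i : Fin n, q ≠ (α t).1 i} p)
    (hD : ∀ t : unitInterval, ∃ p ∈ {q : X | ∀ i : Fin n, q ≠ (α t).1 i},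
      D t = connectedComponentIn {q : X | ∀ i : Fin n, q ≠ (α t).1 i} p)
    (hmono : ∀ t s : unitInterval, t ≤ s → C t ⊆ C s)
    (hloc : ∀ (t : unitInterval) (p : X), p ∈ D t →
      ∃ ε > (0 : ℝ), ∀ s : unitInterval, |s.1 - t.1| < ε → p ∈ D s)
    (h0 : C 0 = D 0) :
    ∀ t : unitInterval, C t = D t := by
  have hloc' : IsLocallyConsistent D := fun t p hp ↦ Metric.eventually_nhds_iff.2 (hloc t p hp)
  exact fun t ↦ monotone_system_unique_locally_consistent_general hC hD hmono hloc' h0 t t.2.1
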